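/- arXiv:1905.13481 — 3 statements merged into one kernel-verified Lean document; each statement's English description precedes it below -/
import Mathlib

section
/- The space of unordered pairs of points on the circle, Sym2 Circle, is homeomorphic to the Möbius strip, defined as the quotient of the square [0,1] × [0,1] by identifying (0,y) with (1, 1−y) for every y ∈ [0,1]. -/
/-- The closed unit interval `[0,1] ⊆ ℝ` with the subspace topology. -/
abbrev I01 : Type := Set.Icc (0 : ℝ) 1

/-- The relation on the unit square `[0,1] × [0,1]` identifying `(0,y)` with
`(1, 1-y)` for every `y ∈ [0,1]`.  The quotient `Quot mobiusRel` (the Möbius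
strip) is the quotient by the equivalence relation generated by this relation,
with the quotient topology. -/
def mobiusRel (p q : I01 × I01) : Prop :=
  (p.1 : ℝ) = 0 ∧ (q.1 : ℝ) = 1 ∧ (q.2 : ℝ) = 1 - (p.2 : ℝ)

open Real in
/-- The parametrisation of unordered pairs by the midpoint and half the difference. -/
noncomputable def mobF (p : I01 × I01) : Sym2 Circle :=
  Quot.mk _ (Circle.exp (π * ((p.1 : ℝ) + p.2)), Circle.exp (π * ((p.1 : ℝ) - p.2)))

theorem mobF_eq (p : I01 × I01) : mobF p =
    s(Circle.exp (Real.pi * ((p.1 : ℝ) + p.2)), Circle.exp (Real.pi * ((p.1 : ℝ) - p.2))) := rfl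

theorem mobF_continuous : Continuous mobF := by
  unfold mobF
  exact continuous_quot_mk.comp (by fun_prop)

theorem exp_pi_eq_iff (u v : ℝ) : Circle.exp (Real.pi * u) = Circle.exp (Real.pi * v) ↔
    ∃ m : ℤ, u - v = 2 * m := by
  have hpi := Real.pi_ne_zero
  rw [Circle.exp_eq_exp]
  constructor
  · rintro ⟨m, hm⟩
    refine ⟨m, ?_⟩
    apply mul_left_cancel₀ hpi
    linarith
  · rintro ⟨m, hm⟩
    refine ⟨m, ?_⟩
    have : u = v + 2 * m := by linarith
    rw [this]; ring

theorem mobF_rel (p q : I01 × I01) (h : mobiusRel p q) : mobF p = mobF q := by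
  obtain ⟨h1, h2, h3⟩ := h
  rw [mobF_eq, mobF_eq, h1, h2, h3, Sym2.eq_iff]
  right
  constructor
  · rw [exp_pi_eq_iff]; exact ⟨0, by push_cast; ring⟩
  · rw [exp_pi_eq_iff]; exact ⟨-1, by push_cast; ring⟩

theorem int_cases_of_bounds {m : ℤ} {r : ℝ} (h : r = m) (h1 : -1 ≤ r) (h2 : r ≤ 1) :
    m = -1 ∨ m = 0 ∨ m = 1 := by
  rw [h] at h1 h2
  have h1' : -1 ≤ m := by exact_mod_cast h1
  have h2' : m ≤ 1 := by exact_mod_cast h2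
  omega

theorem mobF_inj (p q : I01 × I01) (h : mobF p = mobF q) :
    p = q ∨ mobiusRel p q ∨ mobiusRel q p := by
  obtain ⟨⟨x, hx0, hx1⟩, ⟨t, ht0, ht1⟩⟩ := p
  obtain ⟨⟨x', hx0', hx1'⟩, ⟨t', ht0', ht1'⟩⟩ := q
  rw [mobF_eq, mobF_eq, Sym2.eq_iff] at h
  simp only [exp_pi_eq_iff] at h
  simp only [mobiusRel, Prod.mk.injEq]
  rcases h with ⟨⟨m, hm⟩, ⟨n, hn⟩⟩ | ⟨⟨m, hm⟩, ⟨n, hn⟩⟩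
  · have e1 : x - x' = ((m + n : ℤ) : ℝ) := by push_cast; linarith
    have e2 : t - t' = ((m - n : ℤ) : ℝ) := by push_cast; linarith
    have c1 := int_cases_of_bounds e1 (by linarith) (by linarith)
    have c2 := int_cases_of_bounds e2 (by linarith) (by linarith)
    rcases c1 with c1 | c1 | c1 <;> rcases c2 with c2 | c2 | c2 <;>
      first
      | (exfalso; omega)
      | (rw [c1] at e1; rw [c2] at e2; push_cast at e1 e2
         first
         | (left; constructor <;> apply Subtype.ext <;> dsimp only <;> linarith)
         | (right; left; refine ⟨?_, ?_, ?_⟩ <;> linarith)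
         | (right; right; refine ⟨?_, ?_, ?_⟩ <;> linarith))
  · have e1 : x - x' = ((m + n : ℤ) : ℝ) := by push_cast; linarith
    have e2 : t + t' - 1 = ((m - n - 1 : ℤ) : ℝ) := by push_cast; linarith
    have c1 := int_cases_of_bounds e1 (by linarith) (by linarith)
    have c2 := int_cases_of_bounds e2 (by linarith) (by linarith)
    rcases c1 with c1 | c1 | c1 <;> rcases c2 with c2 | c2 | c2 <;>
      first
      | (exfalso; omega)
      | (rw [c1] at e1; rw [c2] at e2; push_cast at e1 e2
         first
         | (left; constructor <;> apply Subtype.ext <;> dsimp only <;> linarith)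
         | (right; left; refine ⟨?_, ?_, ?_⟩ <;> linarith)
         | (right; right; refine ⟨?_, ?_, ?_⟩ <;> linarith))

theorem exists_angle (a : Circle) : ∃ u : ℝ, -1 < u ∧ u ≤ 1 ∧ Circle.exp (Real.pi * u) = a := by
  have hpi := Real.pi_pos
  refine ⟨Complex.arg a / Real.pi, ?_, ?_, ?_⟩
  · rw [lt_div_iff₀ hpi]; linarith [Complex.neg_pi_lt_arg (a : ℂ)]
  · rw [div_le_iff₀ hpi]; linarith [Complex.arg_le_pi (a : ℂ)]
  · rw [mul_div_cancel₀ _ hpi.ne']; exact Circle.exp_arg a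

theorem mobF_surj_aux (u v : ℝ) (hv : -1 < v) (hu : u ≤ 1) (h : v ≤ u) :
    ∃ p, mobF p = s(Circle.exp (Real.pi * u), Circle.exp (Real.pi * v)) := by
  by_cases hs : 0 ≤ u + v
  · refine ⟨⟨⟨(u + v) / 2, by linarith, by linarith⟩, ⟨(u - v) / 2, by linarith, by linarith⟩⟩, ?_⟩
    rw [mobF_eq, Sym2.eq_iff]
    left
    simp only [exp_pi_eq_iff]
    exact ⟨⟨0, by push_cast; ring⟩, ⟨0, by push_cast; ring⟩⟩
  · refine ⟨⟨⟨(u + v) / 2 + 1, by linarith, by linarith⟩,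
      ⟨1 - (u - v) / 2, by linarith, by linarith⟩⟩, ?_⟩
    rw [mobF_eq, Sym2.eq_iff]
    right
    simp only [exp_pi_eq_iff]
    exact ⟨⟨1, by push_cast; ring⟩, ⟨0, by push_cast; ring⟩⟩

theorem mobF_surj (z : Sym2 Circle) : ∃ p, mobF p = z := by
  induction z using Sym2.ind with
  | _ a b =>
    obtain ⟨u, hu0, hu1, rfl⟩ := exists_angle a
    obtain ⟨v, hv0, hv1, rfl⟩ := exists_angle b
    rcases le_total v u with h | h
    · exact mobF_surj_aux u v hv0 hu1 h
    · rw [Sym2.eq_swap]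
      exact mobF_surj_aux v u hu0 hv1 h

/-- Sum and product of an unordered pair. -/
noncomputable def symG : Sym2 Circle → ℂ × ℂ :=
  Quot.lift (fun p : Circle × Circle => ((p.1 : ℂ) + p.2, (p.1 : ℂ) * p.2)) (by
    rintro _ _ (⟨a, b⟩ | ⟨a, b⟩)
    · rfl
    · simp [add_comm, mul_comm])

theorem symG_continuous : Continuous symG :=
  continuous_quot_lift _ (by fun_prop)

theorem symG_injective : Function.Injective symG := by
  intro z w h
  induction z using Sym2.ind with
  | _ a b =>
  induction w using Sym2.ind with
  | _ c d =>
    have h1 : (a : ℂ) + b = c + d := congrArg Prod.fst h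
    have h2 : (a : ℂ) * b = c * d := congrArg Prod.snd h
    rw [Sym2.eq_iff]
    have h3 : ((a : ℂ) - c) * (a - d) = 0 := by linear_combination (a : ℂ) * h1 - h2
    rcases mul_eq_zero.mp h3 with h4 | h4
    · left
      exact ⟨Circle.ext (by linear_combination h4), Circle.ext (by linear_combination h1 - h4)⟩
    · right
      exact ⟨Circle.ext (by linear_combination h4), Circle.ext (by linear_combination h1 - h4)⟩

/-- The space of unordered pairs of points on the circle is homeomorphic to the
Möbius strip. -/
theorem sym2_circle_homeomorph_mobius :
    Nonempty (Sym2 Circle ≃ₜ Quot mobiusRel) := by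
  have : T2Space (Sym2 Circle) := T2Space.of_injective_continuous symG_injective symG_continuous
  let f : Quot mobiusRel → Sym2 Circle := Quot.lift mobF mobF_rel
  have hf : Continuous f := continuous_quot_lift _ mobF_continuous
  have hb : Function.Bijective f := by
    constructor
    · rintro ⟨p⟩ ⟨q⟩ h
      rcases mobF_inj p q h with h | h | h
      · rw [h]
      · exact Quot.sound h
      · exact (Quot.sound h).symm
    · intro z
      obtain ⟨p, hp⟩ := mobF_surj z
      exact ⟨Quot.mk _ p, hp⟩
  have hc : Continuous (Equiv.ofBijective f hb) := hf
  exact ⟨(hc.homeoOfEquivCompactToT2).symm⟩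
end

section
/- The quotient space of the cylinder Circle × [0,1] obtained by collapsing the boundary circle Circle × {0} to a single point and collapsing the boundary circle Circle × {1} to a (different) single point is homeomorphic to the unit sphere in ℝ³. -/
/-- The relation on the cylinder `Circle × [0,1]` collapsing the boundary circle
`Circle × {0}` to one point and the boundary circle `Circle × {1}` to another point.
The quotient `Quot collapseEndsRel` is the quotient by the equivalence relation
generated by this relation, with the quotient topology. -/
def collapseEndsRel (p q : Circle × I01) : Prop :=
  ((p.2 : ℝ) = 0 ∧ (q.2 : ℝ) = 0) ∨ ((p.2 : ℝ) = 1 ∧ (q.2 : ℝ) = 1)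

/-- The radius of the horizontal slice of the sphere at parameter `t`. -/
noncomputable def sliceRadius (t : ℝ) : ℝ := 2 * Real.sqrt (t * (1 - t))

lemma sliceRadius_sq {t : ℝ} (h0 : 0 ≤ t) (h1 : t ≤ 1) :
    sliceRadius t ^ 2 = 4 * (t * (1 - t)) := by
  have h : 0 ≤ t * (1 - t) := mul_nonneg h0 (by linarith)
  rw [sliceRadius, mul_pow, Real.sq_sqrt h]
  norm_num

lemma circle_sq (z : Circle) : (z : ℂ).re ^ 2 + (z : ℂ).im ^ 2 = 1 := by
  have h := Circle.normSq_coe z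
  rw [Complex.normSq_apply] at h
  nlinarith

lemma norm_eq_one_iff_fin3 (x : EuclideanSpace ℝ (Fin 3)) :
    ‖x‖ = 1 ↔ x 0 ^ 2 + x 1 ^ 2 + x 2 ^ 2 = 1 := by
  rw [EuclideanSpace.norm_eq, Real.sqrt_eq_one, Fin.sum_univ_three]
  simp

/-- The map from the cylinder to the sphere. -/
noncomputable def cylMap (p : Circle × I01) : {x : EuclideanSpace ℝ (Fin 3) // ‖x‖ = 1} :=
  ⟨!₂[sliceRadius p.2 * (p.1 : ℂ).re, sliceRadius p.2 * (p.1 : ℂ).im, 2 * (p.2 : ℝ) - 1], by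
    rw [norm_eq_one_iff_fin3]
    have h1 := sliceRadius_sq p.2.2.1 p.2.2.2
    have h2 := circle_sq p.1
    simp only [Matrix.cons_val]
    linear_combination h1 + (sliceRadius p.2) ^ 2 * h2⟩

lemma cylMap_zero (p : Circle × I01) : (cylMap p).1 0 = sliceRadius p.2 * (p.1 : ℂ).re := rfl
lemma cylMap_one (p : Circle × I01) : (cylMap p).1 1 = sliceRadius p.2 * (p.1 : ℂ).im := rfl
lemma cylMap_two (p : Circle × I01) : (cylMap p).1 2 = 2 * (p.2 : ℝ) - 1 := rfl

lemma continuous_cylMap : Continuous cylMap := by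
  refine Continuous.subtype_mk ?_ _
  refine (PiLp.continuous_toLp 2 _).comp ?_
  refine continuous_pi fun i => ?_
  have hz : Continuous fun p : Circle × I01 => ((p.1 : Circle) : ℂ) :=
    continuous_subtype_val.comp continuous_fst
  have hre := Complex.continuous_re.comp hz
  have him := Complex.continuous_im.comp hz
  have ht : Continuous fun p : Circle × I01 => (p.2 : ℝ) :=
    continuous_subtype_val.comp continuous_snd
  have hr : Continuous fun p : Circle × I01 => sliceRadius p.2 := by
    unfold sliceRadius
    fun_prop
  fin_cases i
  · exact hr.mul hre
  · exact hr.mul him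
  · exact (continuous_const.mul ht).sub continuous_const

lemma cylMap_eq_of_rel (p q : Circle × I01) (h : collapseEndsRel p q) : cylMap p = cylMap q := by
  apply Subtype.ext
  ext i
  fin_cases i
  · change (cylMap p).1 0 = (cylMap q).1 0
    rcases h with ⟨h, h'⟩ | ⟨h, h'⟩ <;> simp [cylMap_zero, sliceRadius, h, h']
  · change (cylMap p).1 1 = (cylMap q).1 1
    rcases h with ⟨h, h'⟩ | ⟨h, h'⟩ <;> simp [cylMap_one, sliceRadius, h, h']
  · change (cylMap p).1 2 = (cylMap q).1 2
    rcases h with ⟨h, h'⟩ | ⟨h, h'⟩ <;> simp [cylMap_two, h, h']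

lemma rel_or_eq_of_cylMap_eq (p q : Circle × I01) (h : cylMap p = cylMap q) :
    collapseEndsRel p q ∨ p = q := by
  have h0 : (cylMap p).1 0 = (cylMap q).1 0 := by rw [h]
  have h1 : (cylMap p).1 1 = (cylMap q).1 1 := by rw [h]
  have h2 : (cylMap p).1 2 = (cylMap q).1 2 := by rw [h]
  rw [cylMap_zero, cylMap_zero] at h0
  rw [cylMap_one, cylMap_one] at h1
  rw [cylMap_two, cylMap_two] at h2
  have ht : (p.2 : ℝ) = q.2 := by linarith
  by_cases hp0 : (p.2 : ℝ) = 0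
  · exact Or.inl (Or.inl ⟨hp0, ht ▸ hp0⟩)
  by_cases hp1 : (p.2 : ℝ) = 1
  · exact Or.inl (Or.inr ⟨hp1, ht ▸ hp1⟩)
  right
  have hr : sliceRadius p.2 ≠ 0 := by
    intro hr
    have := sliceRadius_sq p.2.2.1 p.2.2.2
    rw [hr] at this
    have h3 : (p.2 : ℝ) * (1 - p.2) = 0 := by linarith
    rcases mul_eq_zero.mp h3 with h4 | h4
    · exact hp0 h4
    · exact hp1 (by linarith)
  rw [← ht] at h0 h1
  refine Prod.ext ?_ (Subtype.ext ht)
  apply Circle.ext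
  exact Complex.ext (mul_left_cancel₀ hr h0) (mul_left_cancel₀ hr h1)

lemma cylMap_surjective : Function.Surjective cylMap := by
  rintro ⟨x, hx⟩
  have hx' := (norm_eq_one_iff_fin3 x).mp hx
  have ht0 : 0 ≤ (x 2 + 1) / 2 := by nlinarith [sq_nonneg (x 0), sq_nonneg (x 1)]
  have ht1 : (x 2 + 1) / 2 ≤ 1 := by nlinarith [sq_nonneg (x 0), sq_nonneg (x 1)]
  have hr := sliceRadius_sq ht0 ht1
  have hr' : sliceRadius ((x 2 + 1) / 2) ^ 2 = x 0 ^ 2 + x 1 ^ 2 := by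
    rw [hr]; linear_combination -hx'
  obtain ⟨z, hz0, hz1⟩ : ∃ z : Circle, sliceRadius ((x 2 + 1) / 2) * (z : ℂ).re = x 0 ∧
      sliceRadius ((x 2 + 1) / 2) * (z : ℂ).im = x 1 := by
    generalize sliceRadius ((x 2 + 1) / 2) = r at hr'
    by_cases h : r = 0
    · rw [h] at hr' ⊢
      have e0 : x 0 = 0 := pow_eq_zero_iff (two_ne_zero) |>.mp
        (by nlinarith [sq_nonneg (x 0), sq_nonneg (x 1)])
      have e1 : x 1 = 0 := pow_eq_zero_iff (two_ne_zero) |>.mp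
        (by nlinarith [sq_nonneg (x 0), sq_nonneg (x 1)])
      exact ⟨1, by rw [e0, zero_mul], by rw [e1, zero_mul]⟩
    · refine ⟨⟨⟨x 0 / r, x 1 / r⟩, ?_⟩, ?_, ?_⟩
      · change _ ∈ Metric.sphere (0 : ℂ) 1
        rw [mem_sphere_zero_iff_norm, ← sq_eq_sq₀ (norm_nonneg _) zero_le_one, ← Complex.normSq_eq_norm_sq,
          Complex.normSq_mk]
        field_simp
        linarith
      · change r * (x 0 / r) = x 0
        field_simp
      · change r * (x 1 / r) = x 1
        field_simp
  refine ⟨(z, ⟨(x 2 + 1) / 2, ht0, ht1⟩), ?_⟩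
  apply Subtype.ext
  ext i
  fin_cases i
  · exact hz0
  · exact hz1
  · change 2 * ((x 2 + 1) / 2) - 1 = x 2
    ring

/-- Collapsing each of the two boundary circles of the cylinder to a point
yields the unit sphere in `ℝ³`. -/
theorem cylinder_collapse_ends_homeomorph_sphere :
    Nonempty (Quot collapseEndsRel ≃ₜ {x : EuclideanSpace ℝ (Fin 3) // ‖x‖ = 1}) := by
  have hb : Function.Bijective (Quot.lift cylMap cylMap_eq_of_rel) := by
    constructor
    · rintro ⟨p⟩ ⟨q⟩ h
      rcases rel_or_eq_of_cylMap_eq p q h with h | h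
      · exact Quot.sound h
      · exact congrArg _ h
    · intro y
      obtain ⟨p, hp⟩ := cylMap_surjective y
      exact ⟨Quot.mk _ p, hp⟩
  have hc : Continuous (Equiv.ofBijective _ hb) := continuous_quot_lift cylMap_eq_of_rel continuous_cylMap
  exact ⟨hc.homeoOfEquivCompactToT2⟩
end

section
/- The torus Circle × Circle is not simply connected; consequently, the unit sphere in ℝ³ (which is simply connected) is not homeomorphic to the torus. (The torus has a hole, while the sphere does not.) -/
open unitInterval Polynomial

theorem torus_aux : ¬ SimplyConnectedSpace (Circle × Circle) := by
  intro h
  let f₀ : C(I, ℝ) := ⟨fun t => 2 * Real.pi * (t : ℝ), by fun_prop⟩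
  let f₁ : C(I, ℝ) := ContinuousMap.const I 0
  let p₀ : Path ((1, 1) : Circle × Circle) (1, 1) :=
    { toFun := fun t => (Circle.exp (f₀ t), 1)
      continuous_toFun := by fun_prop
      source' := by simp [f₀]
      target' := by simp [f₀] }
  have hom : p₀.Homotopic (Path.refl _) := SimplyConnectedSpace.paths_homotopic _ _
  obtain ⟨F⟩ := hom
  have key : f₀.HomotopicRel f₁ {0, 1} := by
    rw [Circle.isCoveringMap_exp.homotopicRel_iff_comp ⟨0, by simp, by simp [f₀, f₁]⟩]
    refine ⟨{ toFun := fun z => (F z).1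
              continuous_toFun := by fun_prop
              map_zero_left := fun t => ?_
              map_one_left := fun t => ?_
              prop' := fun t s hs => ?_ }⟩
    · have := F.apply_zero t
      exact congrArg Prod.fst this
    · have := F.apply_one t
      refine (congrArg Prod.fst this).trans ?_
      simp [f₁]
    · exact congrArg Prod.fst (F.prop t s hs)
  obtain ⟨G⟩ := key
  have h1 := G.eq_fst 0 (show (1 : I) ∈ ({0, 1} : Set I) by simp)
  have h2 := G.eq_snd 0 (show (1 : I) ∈ ({0, 1} : Set I) by simp)
  rw [h1] at h2
  simp [f₀, f₁, Real.pi_ne_zero] at h2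

/-- Coordinatewise polynomial approximation of a loop, keeping the endpoints. -/
theorem approx_aux (f : ℝ → ℝ) (hf : Continuous f) :
    ∃ p : ℝ[X], p.eval 0 = f 0 ∧ p.eval 1 = f 1 ∧
      ∀ t ∈ Set.Icc (0 : ℝ) 1, |p.eval t - f t| < 1 / 5 := by
  obtain ⟨p, hp⟩ := exists_polynomial_near_of_continuousOn 0 1 f hf.continuousOn (1 / 10)
    (by norm_num)
  refine ⟨p + (1 - X) * C (f 0 - p.eval 0) + X * C (f 1 - p.eval 1), by simp, by simp, ?_⟩
  intro t ht
  have h := abs_lt.1 (hp t ht)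
  have h0 := abs_lt.1 (hp 0 (by simp))
  have h1 := abs_lt.1 (hp 1 (by simp))
  obtain ⟨ht0, ht1⟩ := ht
  simp only [eval_add, eval_mul, eval_sub, eval_one, eval_X, eval_C]
  rw [abs_lt]
  constructor <;> nlinarith

/-- The complement of a closed ray from the origin is simply connected. -/
theorem ray_compl_aux {E : Type*} [NormedAddCommGroup E] [NormedSpace ℝ E] {v : E} (hv : v ≠ 0) :
    IsSimplyConnected {y : E | ∀ s : ℝ, 0 ≤ s → y ≠ s • v} := by
  have hmem : -v ∈ {y : E | ∀ s : ℝ, 0 ≤ s → y ≠ s • v} := by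
    intro s hs h
    have : (1 + s) • v = 0 := by rw [add_smul, ← h]; simp
    rcases smul_eq_zero.1 this with h' | h'
    · linarith
    · exact hv h'
  have star : StarConvex ℝ (-v) {y : E | ∀ s : ℝ, 0 ≤ s → y ≠ s • v} := by
    intro y hy a b ha hb hab s hs h
    rcases hb.eq_or_lt with rfl | hb
    · obtain rfl : a = 1 := by linarith
      exact hmem s hs (by simpa using h)
    · refine hy ((s + a) / b) (by positivity) ?_
      have : b • y = (s + a) • v := by
        rw [add_smul, ← h]; simp
      rw [div_eq_inv_mul, mul_smul, ← this, smul_smul, inv_mul_cancel₀ hb.ne', one_smul]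
  have := star.contractibleSpace ⟨_, hmem⟩
  exact SimplyConnectedSpace.ofContractible _

theorem sphere_aux : IsSimplyConnected {x : EuclideanSpace ℝ (Fin 3) | ‖x‖ = 1} := by
  rw [isSimplyConnected_iff_exists_homotopy_refl_forall_mem]
  constructor
  · have h := isPathConnected_sphere (E := EuclideanSpace ℝ (Fin 3)) (by
      rw [← Module.finrank_eq_rank]; simp) 0 (zero_le_one)
    have he : {x : EuclideanSpace ℝ (Fin 3) | ‖x‖ = 1} = Metric.sphere 0 1 := by
      ext x
      simp
    rw [he]
    exact h
  intro x γ hγ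
  have hx : ‖x‖ = 1 := by simpa using hγ 0
  choose P hP0 hP1 hP using fun i : Fin 3 =>
    approx_aux (fun t => γ.extend t i) (by fun_prop)
  let g : ℝ → EuclideanSpace ℝ (Fin 3) := fun t => WithLp.toLp 2 fun i => (P i).eval t
  have hgc : ContDiff ℝ 1 g := by
    rw [contDiff_euclidean]
    intro i
    exact (P i).contDiff_aeval 1
  have hg : ∀ t : I, ‖g t - γ t‖ < 1 := by
    intro t
    have h : ∀ i, ((g t - γ t) i) ^ 2 < 1 / 25 := by
      intro i
      have := hP i t t.2
      simp only [Path.extend_apply _ t.2] at this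
      rw [← sq_abs]
      have h2 : |(g t - γ t) i| < 1 / 5 := this
      nlinarith [abs_nonneg ((g t - γ t) i)]
    rw [EuclideanSpace.norm_eq, Real.sqrt_lt' one_pos, Fin.sum_univ_three]
    simp only [Real.norm_eq_abs, sq_abs]
    linarith [h 0, h 1, h 2]
  have hline : ∀ (t : I) (a : ℝ), 0 ≤ a → a ≤ 1 → γ t + a • (g t - γ t) ≠ 0 := by
    intro t a ha0 ha1 h
    have h1 : ‖γ t‖ = 1 := hγ t
    rw [eq_neg_of_add_eq_zero_left h, norm_neg, norm_smul, Real.norm_of_nonneg ha0] at h1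
    nlinarith [hg t, norm_nonneg (g t - γ t)]
  let q : Path x x :=
    { toFun := fun t => g t
      continuous_toFun := hgc.continuous.comp continuous_subtype_val
      source' := by ext i; simpa using hP0 i
      target' := by ext i; simpa using hP1 i }
  let F₁ : γ.Homotopy q :=
    { toFun := fun z => γ z.2 + (z.1 : ℝ) • (q z.2 - γ z.2)
      continuous_toFun := by fun_prop
      map_zero_left := by intro t; simp
      map_one_left := by intro t; simp
      prop' := by
        rintro t s (rfl | rfl)
        · simp
        · simp }
  -- a direction missed by the cone over `q`
  have hcone : ContDiff ℝ 1 (fun z : ℝ × ℝ => z.1 • g z.2) :=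
    contDiff_fst.smul (hgc.comp contDiff_snd)
  obtain ⟨v, hv⟩ := (hcone.dense_compl_range_of_finrank_lt_finrank (by simp)).nonempty
  have hv0 : v ≠ 0 := by
    rintro rfl
    exact hv ⟨(0, 0), by simp⟩
  obtain ⟨F₂, hF₂⟩ := (isSimplyConnected_iff_exists_homotopy_refl_forall_mem.1
    (ray_compl_aux hv0)).2 x q (by
      intro t s hs h
      change g t = s • v at h
      rcases hs.eq_or_lt with rfl | hs
      · apply hline t 1 zero_le_one le_rfl
        rw [h]; simp
      · exact hv ⟨(s⁻¹, t), by simp [h, smul_smul, hs.ne']⟩)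
  have hF : ∀ z, (F₁.trans F₂) z ≠ 0 := by
    intro z
    rw [Path.Homotopy.trans_apply]
    split_ifs
    · exact hline _ _ (unitInterval.nonneg _) (unitInterval.le_one _)
    · have := hF₂
      intro h
      exact hF₂ _ 0 le_rfl (by rw [zero_smul]; exact h)
  generalize F₁.trans F₂ = F at hF
  refine ⟨{ toFun := fun z => ‖F z‖⁻¹ • F z
            continuous_toFun := by
              have : Continuous fun z => F z := by fun_prop
              exact (this.norm.inv₀ fun z => norm_ne_zero_iff.2 (hF z)).smul this
            map_zero_left := by
              intro t
              have : ‖γ t‖ = 1 := hγ t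
              simp [this]
            map_one_left := by intro t; simp [hx]
            prop' := by
              rintro t s (rfl | rfl)
              · simp [hx]
              · simp [hx] }, ?_⟩
  intro z
  change ‖‖F z‖⁻¹ • F z‖ = 1
  rw [norm_smul, norm_inv, norm_norm, inv_mul_cancel₀ (norm_ne_zero_iff.2 (hF z))]

/-- The torus `Circle × Circle` is not simply connected, while the unit sphere
in `ℝ³` is simply connected; consequently the sphere is not homeomorphic to the
torus. -/
theorem torus_not_simplyConnected_and_sphere_not_homeomorph_torus :
    ¬ SimplyConnectedSpace (Circle × Circle) ∧
      SimplyConnectedSpace {x : EuclideanSpace ℝ (Fin 3) // ‖x‖ = 1} ∧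
      IsEmpty ({x : EuclideanSpace ℝ (Fin 3) // ‖x‖ = 1} ≃ₜ Circle × Circle) := by
  have hs : SimplyConnectedSpace {x : EuclideanSpace ℝ (Fin 3) // ‖x‖ = 1} := sphere_aux
  exact ⟨torus_aux, hs, ⟨fun e => torus_aux (e.toHomotopyEquiv.simplyConnectedSpace_iff.1 hs)⟩⟩
end
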